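/- Let ϑ : A → A, ϑ(a) := a·(τ·a)⁻¹, and N : A → A, N(a) := a·(τ·a)·(τ²·a)·(τ³·a). Then: (1) the homomorphism A → Eˣ/N_{E/E₁}(Eˣ) sending (w,z) to the class of w·τ(z)⁻¹ is surjective with kernel equal to im ϑ, so it induces an isomorphism of the coinvariants A_Γ := A/im ϑ with Eˣ/N_{E/E₁}(Eˣ); (2) the map (x, τ(x)) ↦ x is an isomorphism of the fixed subgroup A^τ with ker(N_{E/E₁}) = {x ∈ Eˣ : x·τ²(x) = 1}; and (3) under these two identifications, the map A_Γ → A^τ induced by N is given by sending the class of w ∈ Eˣ to w·τ²(w)⁻¹. -/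

import Mathlib

/-- The automorphism of `Eˣ` induced by a field automorphism `τ` of `E`. -/
def su {F E : Type*} [Field F] [Field E] [Algebra F E] (τ : E ≃ₐ[F] E) : Eˣ ≃* Eˣ :=
  Units.mapEquiv τ.toRingEquiv.toMulEquiv

/-- The action `τ·(x, y) = (τ(y)⁻¹, τ(x))` of the generator `τ` on `A = Eˣ × Eˣ`. -/
def tPair {F E : Type*} [Field F] [Field E] [Algebra F E] (τ : E ≃ₐ[F] E) :
    (Eˣ × Eˣ) ≃* (Eˣ × Eˣ) :=
  (MulEquiv.prodComm : (Eˣ × Eˣ) ≃* (Eˣ × Eˣ)).trans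
    (MulEquiv.prodCongr ((su τ).trans (MulEquiv.inv Eˣ)) (su τ))

/-- The norm map `N(a) = a·(τ·a)·(τ²·a)·(τ³·a)` as a homomorphism of `A = Eˣ × Eˣ`. -/
def NA {F E : Type*} [Field F] [Field E] [Algebra F E] (τ : E ≃ₐ[F] E) :
    (Eˣ × Eˣ) →* (Eˣ × Eˣ) :=
  (MonoidHom.id _) * (tPair τ).toMonoidHom * ((tPair τ).trans (tPair τ)).toMonoidHom *
    ((tPair τ).trans ((tPair τ).trans (tPair τ))).toMonoidHom

/-- The map `ϑ(a) = a·(τ·a)⁻¹` as a homomorphism of `A = Eˣ × Eˣ`. -/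
def thetaHom {F E : Type*} [Field F] [Field E] [Algebra F E] (τ : E ≃ₐ[F] E) :
    (Eˣ × Eˣ) →* (Eˣ × Eˣ) :=
  (MonoidHom.id _) * ((tPair τ).trans (MulEquiv.inv _)).toMonoidHom

/-- The norm homomorphism `N_{E/E₁} : x ↦ x·τ²(x)` (valued in `Eˣ`). -/
def nrm21 {F E : Type*} [Field F] [Field E] [Algebra F E] (τ : E ≃ₐ[F] E) : Eˣ →* Eˣ :=
  (MonoidHom.id Eˣ) * ((su τ).trans (su τ)).toMonoidHom

/-- The homomorphism `A → Eˣ/N_{E/E₁}(Eˣ)` sending `(w, z)` to the class of `w·τ(z)⁻¹`. -/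
def gbar {F E : Type*} [Field F] [Field E] [Algebra F E] (τ : E ≃ₐ[F] E) :
    (Eˣ × Eˣ) →* (Eˣ ⧸ (nrm21 τ).range) :=
  (QuotientGroup.mk' ((nrm21 τ).range)).comp
    ((MonoidHom.fst Eˣ Eˣ) *
      (((su τ).trans (MulEquiv.inv Eˣ)).toMonoidHom.comp (MonoidHom.snd Eˣ Eˣ)))

/-- The `τ`-fixed subgroup `A^τ` of `A = Eˣ × Eˣ`. -/
def Afix {F E : Type*} [Field F] [Field E] [Algebra F E] (τ : E ≃ₐ[F] E) :
    Subgroup (Eˣ × Eˣ) where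
  carrier := {p | tPair τ p = p}
  one_mem' := by simp
  mul_mem' := by
    intro a b ha hb
    simp only [Set.mem_setOf_eq, map_mul] at *
    rw [ha, hb]
  inv_mem' := by
    intro a ha
    simp only [Set.mem_setOf_eq, map_inv] at *
    rw [ha]

theorem tPair_app {F E : Type*} [Field F] [Field E] [Algebra F E] (τ : E ≃ₐ[F] E) (x y : Eˣ) :
    tPair τ (x, y) = ((su τ y)⁻¹, su τ x) := rfl

theorem NA_app {F E : Type*} [Field F] [Field E] [Algebra F E] (τ : E ≃ₐ[F] E) (p : Eˣ × Eˣ) :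
    NA τ p = p * tPair τ p * tPair τ (tPair τ p) * tPair τ (tPair τ (tPair τ p)) := rfl

theorem theta_app {F E : Type*} [Field F] [Field E] [Algebra F E] (τ : E ≃ₐ[F] E) (x y : Eˣ) :
    thetaHom τ (x, y) = (x * su τ y, y * (su τ x)⁻¹) := by
  have : thetaHom τ (x, y) = (x * ((su τ y)⁻¹)⁻¹, y * (su τ x)⁻¹) := rfl
  rw [this, inv_inv]

theorem nrm_app {F E : Type*} [Field F] [Field E] [Algebra F E] (τ : E ≃ₐ[F] E) (x : Eˣ) :
    nrm21 τ x = x * su τ (su τ x) := rfl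

theorem gbar_app {F E : Type*} [Field F] [Field E] [Algebra F E] (τ : E ≃ₐ[F] E) (x y : Eˣ) :
    gbar τ (x, y) = QuotientGroup.mk (x * (su τ y)⁻¹) := rfl

theorem su_four {F E : Type*} [Field F] [Field E] [Algebra F E] (τ : E ≃ₐ[F] E)
    (hτ : orderOf τ = 4) (x : Eˣ) : su τ (su τ (su τ (su τ x))) = x := by
  have h : τ ^ 4 = 1 := hτ ▸ pow_orderOf_eq_one τ
  ext
  exact congrArg (fun f : E ≃ₐ[F] E => f (x : E)) h

theorem mem_Afix {F E : Type*} [Field F] [Field E] [Algebra F E] (τ : E ≃ₐ[F] E) (x y : Eˣ) :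
    (x, y) ∈ Afix τ ↔ y = su τ x ∧ x * su τ (su τ x) = 1 := by
  change tPair τ (x, y) = (x, y) ↔ _
  rw [tPair_app, Prod.mk.injEq]
  constructor
  · rintro ⟨h1, h2⟩
    refine ⟨h2.symm, ?_⟩
    rw [h2, ← h1, inv_mul_cancel]
  · rintro ⟨rfl, h⟩
    exact ⟨(eq_inv_of_mul_eq_one_left h).symm, rfl⟩

/-- (1) the homomorphism `A → Eˣ/N_{E/E₁}(Eˣ)`, `(w,z) ↦ [w·τ(z)⁻¹]`, is
surjective with kernel `im ϑ`, inducing an isomorphism `A_Γ = A/im ϑ ≅ Eˣ/N_{E/E₁}(Eˣ)`;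
(2) `(x, τ(x)) ↦ x` is an isomorphism `A^τ ≅ ker N_{E/E₁}`; (3) under these identifications
the norm map `A_Γ → A^τ` is `[w] ↦ w·τ²(w)⁻¹`, i.e. `N(w,z) = (u·τ²(u)⁻¹, τ(u·τ²(u)⁻¹))`
for `u = w·τ(z)⁻¹`. -/
theorem statement_6 {F E : Type*} [Field F] [Field E] [Algebra F E] [IsGalois F E]
    (hdeg : Module.finrank F E = 4) (τ : E ≃ₐ[F] E) (hτ : orderOf τ = 4) :
    Function.Surjective (gbar τ) ∧
    (gbar τ).ker = (thetaHom τ).range ∧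
    Nonempty (((Eˣ × Eˣ) ⧸ (thetaHom τ).range) ≃* (Eˣ ⧸ (nrm21 τ).range)) ∧
    (∃ e : Afix τ ≃* (nrm21 τ).ker, ∀ p : Afix τ, ((e p : Eˣ)) = (p : Eˣ × Eˣ).1) ∧
    (∀ w z : Eˣ,
      NA τ (w, z) =
        ((w * (su τ z)⁻¹) * (su τ (su τ (w * (su τ z)⁻¹)))⁻¹,
          su τ ((w * (su τ z)⁻¹) * (su τ (su τ (w * (su τ z)⁻¹)))⁻¹))) := by
  have hs : Function.Surjective (gbar τ) := by
    intro q
    obtain ⟨w, rfl⟩ := QuotientGroup.mk_surjective q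
    exact ⟨(w, 1), by rw [gbar_app]; simp⟩
  have hk : (gbar τ).ker = (thetaHom τ).range := by
    ext ⟨w, z⟩
    rw [MonoidHom.mem_ker, gbar_app, QuotientGroup.eq_one_iff, MonoidHom.mem_range,
      MonoidHom.mem_range]
    constructor
    · rintro ⟨x, hx⟩
      rw [nrm_app, eq_mul_inv_iff_mul_eq] at hx
      refine ⟨(x, z * su τ x), ?_⟩
      rw [theta_app, map_mul, mul_inv_cancel_right, ← hx]
      congr 1
      rw [mul_assoc, mul_comm (su τ z)]
    · rintro ⟨⟨x, y⟩, h⟩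
      rw [theta_app, Prod.mk.injEq] at h
      obtain ⟨rfl, rfl⟩ := h
      refine ⟨x, ?_⟩
      rw [nrm_app, map_mul, map_inv, mul_inv, inv_inv]
      rw [mul_assoc, mul_inv_cancel_left]
  refine ⟨hs, hk, ?_, ?_, ?_⟩
  · exact ⟨(QuotientGroup.quotientMulEquivOfEq hk.symm).trans
      (QuotientGroup.quotientKerEquivOfSurjective (gbar τ) hs)⟩
  · refine ⟨{ toFun := fun p => ⟨p.1.1, ((mem_Afix τ p.1.1 p.1.2).1 p.2).2⟩
              invFun := fun x => ⟨(x.1, su τ x.1), (mem_Afix τ _ _).2 ⟨rfl, x.2⟩⟩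
              left_inv := ?_
              right_inv := fun x => rfl
              map_mul' := fun p q => rfl }, fun p => rfl⟩
    rintro ⟨⟨x, y⟩, h⟩
    have := ((mem_Afix τ x y).1 h).1
    subst this
    rfl
  · intro w z
    rw [NA_app]
    simp only [tPair_app, map_mul, map_inv, Prod.mk_mul_mk, mul_inv, inv_inv, su_four τ hτ,
      Prod.mk.injEq]
    constructor
    · simp only [mul_assoc]
    · rw [mul_assoc z, mul_assoc z, mul_comm z]
      simp only [mul_assoc]
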